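/- Let H ∈ (1/2, 1), T > 0, and let ξ : [0,T] → ℝ be Hölder continuous with some exponent α ∈ (2H − 1, 1] and satisfy ξ(0) = 0. Set c₁ := 1/(2H Γ(3/2 − H) Γ(H + 1/2)) and μ(t) := c₁ ∫₀^t (t − s)^{1/2−H} s^{1/2−H} ξ(s) ds for t ∈ [0,T]. Then μ is absolutely continuous, and there exists a function ψ : [0,T] → ℝ that is Hölder continuous with exponent α + 1 − 2H such that the derivative μ′ of μ satisfies μ′(t) = c₁ ξ(t) + ψ(t) for almost every t ∈ [0,T]. -/

import Mathlib

open MeasureTheory Real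

/-- The constant `c₁ = 1 / (2H Γ(3/2 − H) Γ(H + 1/2))`. -/
noncomputable def c₁ (H : ℝ) : ℝ :=
  1 / (2 * H * Real.Gamma (3 / 2 - H) * Real.Gamma (H + 1 / 2))

/-- `η(t) = ∫₀^t s^(1/2−H) ξ(s) ds`. -/
noncomputable def η (H : ℝ) (ξ : ℝ → ℝ) (t : ℝ) : ℝ :=
  ∫ s in Set.Ioc (0 : ℝ) t, s ^ (1 / 2 - H) * ξ s

/-- `μ(t) = c₁ ∫₀^t (t−s)^(1/2−H) s^(1/2−H) ξ(s) ds`. -/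
noncomputable def μfn (H : ℝ) (ξ : ℝ → ℝ) (t : ℝ) : ℝ :=
  c₁ H * ∫ s in Set.Ioc (0 : ℝ) t, (t - s) ^ (1 / 2 - H) * s ^ (1 / 2 - H) * ξ s

/-!
Since `ξ 0 = 0`, dividing by `s ^ δ` costs `δ` in the Hölder exponent only: `f s = s ^ (-δ) ξ s` is
Hölder of exponent `α - δ` on `[0, T]`, and it extends constantly to a bounded Hölder function on
`ℝ` vanishing on `(-∞, 0]`. Writing `v ^ (-β) = β ∫ u in v..∞, u ^ (-β - 1)` and using Fubini twice,
`∫ s in 0..t, (t - s) ^ (-β) f s` is the integral over `[0, t]` of the Marchaud derivative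
`D r = β ∫ u in 0..∞, u ^ (-β - 1) (f r - f (r - u))`. The second difference of `f` with
increments `u` and `h` is of order `min u h ^ (α - δ)`, so `D` is Hölder of exponent `α - δ - β`.
For `β = δ = H - 1/2` this exponent is `α + 1 - 2 H`. Thus `μ'` is itself Hölder of the exponent
asked of `ψ`, and so is `ψ = μ' - c₁ ξ` because `α` is larger.
-/

open Set
open scoped NNReal

theorem holderOnWith_iff_dist_le {X Y : Type*} [PseudoMetricSpace X] [PseudoMetricSpace Y]
    {C r : ℝ≥0} {f : X → Y} {s : Set X} :
    HolderOnWith C r f s ↔ ∀ x ∈ s, ∀ y ∈ s, dist (f x) (f y) ≤ C * dist x y ^ (r : ℝ) := by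
  refine ⟨fun hf x hx y hy => hf.dist_le hx hy, fun hf x hx y hy => ?_⟩
  rw [edist_nndist, edist_nndist, ← ENNReal.coe_rpow_of_nonneg _ r.coe_nonneg]
  exact_mod_cast hf x hx y hy

theorem holderWith_iff_dist_le {X Y : Type*} [PseudoMetricSpace X] [PseudoMetricSpace Y]
    {C r : ℝ≥0} {f : X → Y} :
    HolderWith C r f ↔ ∀ x y, dist (f x) (f y) ≤ C * dist x y ^ (r : ℝ) := by
  simp only [← holderOnWith_univ, holderOnWith_iff_dist_le, mem_univ, true_imp_iff]

theorem holderOnWith_sub {X Y : Type*} [PseudoMetricSpace X] [SeminormedAddCommGroup Y]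
    {C C' r : ℝ≥0} {f g : X → Y} {s : Set X} (hf : HolderOnWith C r f s)
    (hg : HolderOnWith C' r g s) : HolderOnWith (C + C') r (fun x => f x - g x) s := by
  refine holderOnWith_iff_dist_le.2 fun x hx y hy => ?_
  rw [NNReal.coe_add, add_mul]
  exact (dist_sub_sub_le _ _ _ _).trans (add_le_add (hf.dist_le hx hy) (hg.dist_le hx hy))

theorem holderWith_comp_projIcc {Y : Type*} [PseudoEMetricSpace Y] {C r : ℝ≥0} {f : ℝ → Y}
    {a b : ℝ} (hab : a ≤ b) (hf : HolderOnWith C r f (Icc a b)) :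
    HolderWith C r (fun x => f (projIcc a b hab x)) := by
  have hproj : HolderWith 1 1 (fun x => (projIcc a b hab x : ℝ)) :=
    (LipschitzWith.projIcc hab).holderWith
  have := hf.comp_holderWith hproj fun x => (projIcc a b hab x).2
  simpa only [NNReal.one_rpow, mul_one, Function.comp_def] using this

section Weight

variable {β γ h : ℝ}

theorem rpow_mul_min_rpow_eqOn_Ioc :
    EqOn (fun u : ℝ => u ^ (-β - 1) * min u h ^ (β + γ)) (fun u => u ^ (γ - 1)) (Ioc 0 h) := by
  intro u hu
  simp only [min_eq_left hu.2]
  rw [← rpow_add hu.1]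
  ring_nf

theorem rpow_mul_min_rpow_eqOn_Ioi :
    EqOn (fun u : ℝ => u ^ (-β - 1) * min u h ^ (β + γ)) (fun u => u ^ (-β - 1) * h ^ (β + γ))
      (Ioi h) := by
  intro u hu
  simp only [min_eq_right (mem_Ioi.1 hu).le]

theorem integrableOn_Ioc_rpow_mul_min_rpow (hγ : 0 < γ) (hh : 0 < h) :
    IntegrableOn (fun u => u ^ (-β - 1) * min u h ^ (β + γ)) (Ioc 0 h) := by
  rw [integrableOn_congr_fun rpow_mul_min_rpow_eqOn_Ioc measurableSet_Ioc,
    ← intervalIntegrable_iff_integrableOn_Ioc_of_le hh.le]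
  exact intervalIntegral.intervalIntegrable_rpow' (by linarith)

theorem integrableOn_Ioi_cutoff_rpow_mul_min_rpow (hβ : 0 < β) (hh : 0 < h) :
    IntegrableOn (fun u => u ^ (-β - 1) * min u h ^ (β + γ)) (Ioi h) := by
  rw [integrableOn_congr_fun rpow_mul_min_rpow_eqOn_Ioi measurableSet_Ioi]
  exact (integrableOn_Ioi_rpow_of_lt (by linarith) hh).mul_const _

theorem integrableOn_Ioi_rpow_mul_min_rpow (hβ : 0 < β) (hγ : 0 < γ) (hh : 0 < h) :
    IntegrableOn (fun u => u ^ (-β - 1) * min u h ^ (β + γ)) (Ioi 0) := by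
  rw [← Ioc_union_Ioi_eq_Ioi hh.le]
  exact (integrableOn_Ioc_rpow_mul_min_rpow hγ hh).union
    (integrableOn_Ioi_cutoff_rpow_mul_min_rpow hβ hh)

theorem integral_Ioi_rpow_mul_min_rpow (hβ : 0 < β) (hγ : 0 < γ) (hh : 0 < h) :
    ∫ u in Ioi 0, u ^ (-β - 1) * min u h ^ (β + γ) = (1 / γ + 1 / β) * h ^ γ := by
  have near : ∫ u in Ioc 0 h, u ^ (-β - 1) * min u h ^ (β + γ) = h ^ γ / γ := by
    rw [setIntegral_congr_fun measurableSet_Ioc rpow_mul_min_rpow_eqOn_Ioc,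
      ← intervalIntegral.integral_of_le hh.le, integral_rpow (Or.inl (by linarith)),
      sub_add_cancel, zero_rpow hγ.ne', sub_zero]
  have far : ∫ u in Ioi h, u ^ (-β - 1) * min u h ^ (β + γ) = h ^ γ / β := by
    rw [setIntegral_congr_fun measurableSet_Ioi rpow_mul_min_rpow_eqOn_Ioi, integral_mul_const,
      integral_Ioi_rpow_of_lt (by linarith) hh, sub_add_cancel, neg_div_neg_eq, div_mul_eq_mul_div,
      ← rpow_add hh, neg_add_cancel_left]
  rw [← Ioc_union_Ioi_eq_Ioi hh.le, setIntegral_union (Ioc_disjoint_Ioi le_rfl) measurableSet_Ioi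
    (integrableOn_Ioc_rpow_mul_min_rpow hγ hh) (integrableOn_Ioi_cutoff_rpow_mul_min_rpow hβ hh),
    near, far]
  ring

end Weight

variable {E : Type*} [NormedAddCommGroup E]

section Increments

variable {C r : ℝ≥0} {f : ℝ → E} {u : ℝ}

theorem norm_sub_le_mul_min_rpow (hf : HolderWith C r f) {M : ℝ} (hM : ∀ x, ‖f x‖ ≤ M)
    (hu : 0 ≤ u) (t : ℝ) :
    ‖f t - f (t - u)‖ ≤ max (C : ℝ) (2 * M) * min u 1 ^ (r : ℝ) := by
  rcases le_total u 1 with hu1 | hu1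
  · have := hf.dist_le t (t - u)
    rw [dist_eq_norm, Real.dist_eq, sub_sub_cancel, abs_of_nonneg hu] at this
    rw [min_eq_left hu1]
    exact this.trans (by gcongr; exact le_max_left _ _)
  · rw [min_eq_right hu1, one_rpow, mul_one]
    refine (norm_sub_le _ _).trans (le_trans ?_ (le_max_right _ _))
    linarith [hM t, hM (t - u)]

theorem norm_sub_sub_sub_le_mul_min_rpow (hf : HolderWith C r f) (hu : 0 ≤ u) (s t : ℝ) :
    ‖(f t - f (t - u)) - (f s - f (s - u))‖ ≤ 2 * C * min u |t - s| ^ (r : ℝ) := by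
  have htu := hf.dist_le t (t - u)
  have hsu := hf.dist_le s (s - u)
  have hts := hf.dist_le t s
  have htsu := hf.dist_le (t - u) (s - u)
  simp only [dist_eq_norm, Real.norm_eq_abs, sub_sub_cancel, sub_sub_sub_cancel_right,
    abs_of_nonneg hu] at htu hsu hts htsu
  rcases min_cases u |t - s| with ⟨hmin, -⟩ | ⟨hmin, -⟩ <;> rw [hmin]
  · linarith [norm_sub_le (f t - f (t - u)) (f s - f (s - u))]
  · rw [sub_sub_sub_comm]
    linarith [norm_sub_le (f t - f s) (f (t - u) - f (s - u))]

end Increments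

variable [NormedSpace ℝ E]

/-- The Marchaud fractional derivative of order `β ∈ (0, 1)`, up to the factor `1 / Γ(1 - β)`. If
`f` is bounded, Hölder of exponent larger than `β` and supported in `[0, ∞)`, its primitive is
`t ↦ ∫ s in 0..t, (t - s) ^ (-β) f s`. Working with functions on all of `ℝ` avoids the boundary term
`t ^ (-β) f t` of the version on `[0, t]`. If the integrand is not integrable, the value is `0`. -/
noncomputable def marchaudDeriv (β : ℝ) (f : ℝ → E) (t : ℝ) : E :=
  β • ∫ u in Ioi (0 : ℝ), u ^ (-β - 1) • (f t - f (t - u))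

section Marchaud

variable {β γ C : ℝ≥0} {M : ℝ} {f : ℝ → E}

theorem norm_marchaud_integrand_le (hf : HolderWith C (β + γ) f) (hM : ∀ x, ‖f x‖ ≤ M)
    {u : ℝ} (hu : 0 ≤ u) (t : ℝ) :
    ‖u ^ (-β - 1 : ℝ) • (f t - f (t - u))‖ ≤
      max (C : ℝ) (2 * M) * (u ^ (-β - 1 : ℝ) * min u 1 ^ (β + γ : ℝ)) := by
  rw [norm_smul, norm_of_nonneg (rpow_nonneg hu _), mul_left_comm]
  have := norm_sub_le_mul_min_rpow hf hM hu t
  rw [NNReal.coe_add] at this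
  gcongr

theorem integrableOn_marchaud_integrand (hβ : 0 < β) (hγ : 0 < γ)
    (hf : HolderWith C (β + γ) f) (hM : ∀ x, ‖f x‖ ≤ M) (t : ℝ) :
    IntegrableOn (fun u => u ^ (-β - 1 : ℝ) • (f t - f (t - u))) (Ioi 0) := by
  have hcont : Continuous f := hf.continuous (add_pos hβ hγ)
  refine ((integrableOn_Ioi_rpow_mul_min_rpow hβ hγ one_pos).const_mul
    (max (C : ℝ) (2 * M))).mono' ?_ ?_
  · exact (by fun_prop : Measurable fun u : ℝ => u ^ (-β - 1 : ℝ)).aestronglyMeasurable.smul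
      (by fun_prop : Continuous fun u => f t - f (t - u)).aestronglyMeasurable
  · filter_upwards [ae_restrict_mem measurableSet_Ioi] with u hu
    exact norm_marchaud_integrand_le hf hM (mem_Ioi.1 hu).le t

theorem holderWith_marchaudDeriv (hβ : 0 < β) (hγ : 0 < γ)
    (hf : HolderWith C (β + γ) f) (hM : ∀ x, ‖f x‖ ≤ M) :
    HolderWith (β * (2 * C * (1 / γ + 1 / β))) γ (marchaudDeriv β f) := by
  refine holderWith_iff_dist_le.2 fun t s => ?_
  rcases eq_or_ne t s with rfl | hts
  · simp only [dist_self]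
    positivity
  have hh : 0 < |t - s| := abs_pos.2 (sub_ne_zero.2 hts)
  have hint := integrableOn_marchaud_integrand hβ hγ hf hM
  have hdiff : marchaudDeriv β f t - marchaudDeriv β f s =
      (β : ℝ) • ∫ u in Ioi (0 : ℝ),
        u ^ (-β - 1 : ℝ) • ((f t - f (t - u)) - (f s - f (s - u))) := by
    simp only [marchaudDeriv, smul_sub (_ ^ _) (f t - _)]
    rw [integral_sub (hint t) (hint s), smul_sub]
  rw [dist_eq_norm, hdiff, norm_smul, NNReal.norm_eq, Real.dist_eq]
  push_cast
  rw [mul_assoc (β : ℝ), mul_assoc (2 * C : ℝ),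
    ← integral_Ioi_rpow_mul_min_rpow (NNReal.coe_pos.2 hβ) (NNReal.coe_pos.2 hγ) hh,
    ← integral_const_mul]
  gcongr
  refine norm_integral_le_of_norm_le
    ((integrableOn_Ioi_rpow_mul_min_rpow hβ hγ hh).const_mul _) ?_
  filter_upwards [ae_restrict_mem measurableSet_Ioi] with u hu
  have hu : 0 ≤ u := (mem_Ioi.1 hu).le
  rw [norm_smul, norm_of_nonneg (rpow_nonneg hu _), mul_left_comm]
  have := norm_sub_sub_sub_le_mul_min_rpow hf hu s t
  rw [NNReal.coe_add] at this
  gcongr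

end Marchaud

section Fubini

variable {β : ℝ}

theorem integral_Ioi_indicator_rpow (hβ : 0 < β) {v : ℝ} (hv : 0 < v) :
    β * ∫ u in Ioi 0, (Ici v).indicator (fun u => u ^ (-β - 1)) u = v ^ (-β) := by
  rw [setIntegral_indicator measurableSet_Ici, inter_eq_right.2 (Ici_subset_Ioi.2 hv),
    integral_Ici_eq_integral_Ioi, integral_Ioi_rpow_of_lt (by linarith) hv, sub_add_cancel,
    neg_div_neg_eq, mul_div_cancel₀ _ hβ.ne']

theorem integrableOn_Ioi_indicator_rpow (hβ : 0 < β) {v : ℝ} (hv : 0 < v) :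
    IntegrableOn ((Ici v).indicator fun u => u ^ (-β - 1)) (Ioi 0) := by
  rw [integrableOn_indicator_iff measurableSet_Ici, inter_eq_left.2 (Ici_subset_Ioi.2 hv),
    integrableOn_Ici_iff_integrableOn_Ioi]
  exact integrableOn_Ioi_rpow_of_lt (by linarith) hv

theorem aestronglyMeasurable_of_rpow_smul {r : ℝ} {g : ℝ → E}
    (hg : AEStronglyMeasurable (fun v => v ^ r • g v) (volume.restrict (Ioi 0))) :
    AEStronglyMeasurable g (volume.restrict (Ioi 0)) := by
  have hinv : Measurable fun v : ℝ => v ^ (-r) := by fun_prop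
  refine (hinv.aestronglyMeasurable.smul hg).congr ?_
  filter_upwards [ae_restrict_mem measurableSet_Ioi] with v hv
  rw [Pi.smul_apply', smul_smul, ← rpow_add hv, neg_add_cancel, rpow_zero, one_smul]

theorem integrable_indicator_rpow_smul (hβ : 0 < β) {g : ℝ → E}
    (hg : IntegrableOn (fun v => v ^ (-β) • g v) (Ioi 0)) :
    Integrable (fun p : ℝ × ℝ => (Ici p.2).indicator (fun u => u ^ (-β - 1)) p.1 • g p.2)
      ((volume.restrict (Ioi 0)).prod (volume.restrict (Ioi 0))) := by
  have hker : Measurable fun p : ℝ × ℝ => (Ici p.2).indicator (fun u => u ^ (-β - 1)) p.1 := by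
    simp only [indicator_apply, mem_Ici]
    exact Measurable.ite (measurableSet_le measurable_snd measurable_fst) (by fun_prop)
      measurable_const
  refine (integrable_prod_iff' (hker.aestronglyMeasurable.smul
    (aestronglyMeasurable_of_rpow_smul hg.aestronglyMeasurable).comp_snd)).2 ⟨?_, ?_⟩
  · filter_upwards [ae_restrict_mem measurableSet_Ioi] with v hv
    exact (integrableOn_Ioi_indicator_rpow hβ hv).smul_const (g v)
  · refine (hg.norm.const_mul β⁻¹).congr ?_
    filter_upwards [ae_restrict_mem measurableSet_Ioi] with v hv
    have hnorm : ∀ u ∈ Ioi (0 : ℝ),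
        ‖(Ici v).indicator (fun u => u ^ (-β - 1)) u • g v‖ =
          (Ici v).indicator (fun u => u ^ (-β - 1)) u * ‖g v‖ := fun u hu => by
      rw [norm_smul, norm_of_nonneg]
      exact indicator_apply_nonneg fun _ => rpow_nonneg (mem_Ioi.1 hu).le _
    simp only [Pi.smul_apply']
    rw [setIntegral_congr_fun measurableSet_Ioi hnorm, integral_mul_const, norm_smul,
      norm_of_nonneg (rpow_nonneg (mem_Ioi.1 hv).le _), ← integral_Ioi_indicator_rpow hβ hv]
    field_simp

theorem integral_Ioi_rpow_smul_integral_Ioc [CompleteSpace E] (hβ : 0 < β) {g : ℝ → E}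
    (hg : IntegrableOn (fun v => v ^ (-β) • g v) (Ioi 0)) :
    β • ∫ u in Ioi 0, u ^ (-β - 1) • ∫ v in Ioc 0 u, g v = ∫ v in Ioi 0, v ^ (-β) • g v := by
  have hinner (u : ℝ) : u ^ (-β - 1) • ∫ v in Ioc 0 u, g v =
      ∫ v in Ioi 0, (Ici v).indicator (fun u => u ^ (-β - 1)) u • g v := by
    have (v : ℝ) : (Ici v).indicator (fun u => u ^ (-β - 1)) u • g v =
        (Iic u).indicator (fun v => u ^ (-β - 1) • g v) v := by
      simp only [indicator_apply, mem_Ici, mem_Iic, ite_smul, zero_smul]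
    simp only [this]
    rw [setIntegral_indicator measurableSet_Iic, Ioi_inter_Iic, integral_smul]
  simp only [hinner]
  rw [integral_integral_swap (integrable_indicator_rpow_smul hβ hg), ← integral_smul]
  refine setIntegral_congr_fun measurableSet_Ioi fun v hv => ?_
  simp only [integral_smul_const, smul_smul, integral_Ioi_indicator_rpow hβ hv]

end Fubini

theorem intervalIntegral_sub_comp_sub {f : ℝ → E} (hf : Continuous f) (a b u : ℝ) :
    ∫ r in a..b, (f r - f (r - u)) = ∫ v in (0)..u, (f (b - v) - f (a - v)) := by
  have hint (c d : ℝ) : IntervalIntegrable f volume c d := hf.intervalIntegrable c d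
  have hcomp {φ : ℝ → ℝ} (hφ : Continuous φ) (c d : ℝ) :
      IntervalIntegrable (fun x => f (φ x)) volume c d := (hf.comp hφ).intervalIntegrable c d
  rw [intervalIntegral.integral_sub (hint a b) (hcomp (by fun_prop) a b),
    intervalIntegral.integral_sub (hcomp (by fun_prop) 0 u) (hcomp (by fun_prop) 0 u),
    intervalIntegral.integral_comp_sub_right f, intervalIntegral.integral_comp_sub_left f,
    intervalIntegral.integral_comp_sub_left f, sub_zero, sub_zero,
    intervalIntegral.integral_interval_sub_interval_comm' (hint _ _) (hint _ _) (hint _ _)]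

theorem setIntegral_sub_comp_sub {f : ℝ → E} (hf : Continuous f) (h0 : ∀ x ≤ 0, f x = 0)
    {t u : ℝ} (ht : 0 ≤ t) (hu : 0 ≤ u) :
    ∫ r in Ioc 0 t, (f r - f (r - u)) = ∫ v in Ioc 0 u, f (t - v) := by
  rw [← intervalIntegral.integral_of_le ht, intervalIntegral_sub_comp_sub hf,
    intervalIntegral.integral_of_le hu]
  refine setIntegral_congr_fun measurableSet_Ioc fun v hv => ?_
  simp only [h0 (0 - v) (by linarith [hv.1]), sub_zero]

theorem setIntegral_Ioi_rpow_smul_comp_sub {β t : ℝ} {f : ℝ → E} (h0 : ∀ x ≤ 0, f x = 0)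
    (ht : 0 ≤ t) :
    ∫ u in Ioi 0, u ^ (-β) • f (t - u) = ∫ s in Ioc 0 t, (t - s) ^ (-β) • f s := by
  rw [setIntegral_eq_of_subset_of_forall_sdiff_eq_zero (s := Ioc 0 t) measurableSet_Ioi
      Ioc_subset_Ioi_self fun u hu => by rw [h0 (t - u) (by grind), smul_zero],
    ← intervalIntegral.integral_of_le ht, ← intervalIntegral.integral_of_le ht]
  simpa using intervalIntegral.integral_comp_sub_left (a := 0) (b := t)
    (fun s => (t - s) ^ (-β) • f s) t

theorem integrableOn_Ioi_rpow_smul_comp_sub {β t : ℝ} (hβ : β < 1) {f : ℝ → E} (hf : Continuous f)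
    (h0 : ∀ x ≤ 0, f x = 0) :
    IntegrableOn (fun u => u ^ (-β) • f (t - u)) (Ioi 0) := by
  have hIcc : IntegrableOn (fun u => u ^ (-β) • f (t - u)) (Ioc 0 t) :=
    ((intervalIntegral.intervalIntegrable_rpow' (neg_lt_neg hβ)).smul_continuousOn
      (by fun_prop : Continuous fun u => f (t - u)).continuousOn).1
  exact hIcc.of_forall_sdiff_eq_zero measurableSet_Ioi fun u hu => by
    rw [h0 (t - u) (by grind), smul_zero]

section MarchaudIntegral

variable {β γ C : ℝ≥0} {M : ℝ} {f : ℝ → E}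

theorem integrable_prod_marchaud_integrand (hβ : 0 < β) (hγ : 0 < γ)
    (hf : HolderWith C (β + γ) f) (hM : ∀ x, ‖f x‖ ≤ M) (μ : Measure ℝ) [IsFiniteMeasure μ] :
    Integrable (fun p : ℝ × ℝ => p.2 ^ (-β - 1 : ℝ) • (f p.1 - f (p.1 - p.2)))
      (μ.prod (volume.restrict (Ioi 0))) := by
  have hcont : Continuous f := hf.continuous (add_pos hβ hγ)
  refine (((integrableOn_Ioi_rpow_mul_min_rpow hβ hγ one_pos).const_mul
    (max (C : ℝ) (2 * M))).comp_snd μ).mono' ?_ ?_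
  · exact (by fun_prop : Measurable fun p : ℝ × ℝ => p.2 ^ (-β - 1 : ℝ)).aestronglyMeasurable.smul
      (by fun_prop : Continuous fun p : ℝ × ℝ => f p.1 - f (p.1 - p.2)).aestronglyMeasurable
  · filter_upwards [Measure.quasiMeasurePreserving_snd.ae (ae_restrict_mem measurableSet_Ioi)]
      with p hp
    exact norm_marchaud_integrand_le hf hM (mem_Ioi.1 hp).le p.1

theorem integral_marchaudDeriv [CompleteSpace E] (hβ : 0 < β) (hβ1 : β < 1) (hγ : 0 < γ)
    (hf : HolderWith C (β + γ) f) (hM : ∀ x, ‖f x‖ ≤ M) (h0 : ∀ x ≤ 0, f x = 0) {t : ℝ}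
    (ht : 0 ≤ t) :
    ∫ r in Ioc 0 t, marchaudDeriv β f r = ∫ s in Ioc 0 t, (t - s) ^ (-β : ℝ) • f s := by
  have hcont : Continuous f := hf.continuous (add_pos hβ hγ)
  calc ∫ r in Ioc 0 t, marchaudDeriv β f r
      = (β : ℝ) • ∫ u in Ioi (0 : ℝ), ∫ r in Ioc 0 t,
          u ^ (-β - 1 : ℝ) • (f r - f (r - u)) := by
        simp only [marchaudDeriv]
        rw [integral_smul,
          integral_integral_swap (integrable_prod_marchaud_integrand hβ hγ hf hM _)]
    _ = (β : ℝ) • ∫ u in Ioi (0 : ℝ), u ^ (-β - 1 : ℝ) • ∫ v in Ioc 0 u, f (t - v) := by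
        congr 1
        refine setIntegral_congr_fun measurableSet_Ioi fun u hu => ?_
        simp only [integral_smul, setIntegral_sub_comp_sub hcont h0 ht (mem_Ioi.1 hu).le]
    _ = ∫ u in Ioi (0 : ℝ), u ^ (-β : ℝ) • f (t - u) :=
        integral_Ioi_rpow_smul_integral_Ioc hβ
          (integrableOn_Ioi_rpow_smul_comp_sub hβ1 hcont h0)
    _ = ∫ s in Ioc 0 t, (t - s) ^ (-β : ℝ) • f s := setIntegral_Ioi_rpow_smul_comp_sub h0 ht

end MarchaudIntegral

theorem rpow_neg_sub_rpow_neg_mul_rpow_le {δ ε s t : ℝ} (hδ : δ ≤ 1) (hε0 : 0 ≤ ε) (hε : ε ≤ 1)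
    (hs : 0 < s) (hst : s < t) : (s ^ (-δ) - t ^ (-δ)) * s ^ (δ + ε) ≤ (t - s) ^ ε := by
  have ht : 0 < t := hs.trans hst
  have hts : 0 < t - s := sub_pos.2 hst
  have hratio : s / t ≤ (s / t) ^ δ := by
    simpa only [rpow_one] using
      rpow_le_rpow_of_exponent_ge (div_pos hs ht) ((div_le_one ht).2 hst.le) hδ
  calc (s ^ (-δ) - t ^ (-δ)) * s ^ (δ + ε) = s ^ ε * (1 - (s / t) ^ δ) := by
        rw [rpow_add hs, div_rpow hs.le ht.le, rpow_neg hs.le, rpow_neg ht.le]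
        field_simp
    _ ≤ t ^ ε * (1 - s / t) := by
        have hgap : 0 ≤ 1 - s / t := sub_nonneg.2 ((div_le_one ht).2 hst.le)
        exact (by gcongr : _ ≤ s ^ ε * (1 - s / t)).trans (by gcongr)
    _ = t ^ (ε - 1) * (t - s) := by
        rw [rpow_sub_one ht.ne']
        field_simp
    _ ≤ (t - s) ^ (ε - 1) * (t - s) := by
        gcongr ?_ * _
        exact rpow_le_rpow_of_nonpos hts (sub_le_self t hs.le) (sub_nonpos.2 hε)
    _ = (t - s) ^ ε := by rw [rpow_sub_one hts.ne', div_mul_cancel₀ _ hts.ne']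

theorem norm_rpow_neg_smul_sub_le {δ ε C : ℝ≥0} (hδ : δ ≤ 1) (hε : ε ≤ 1) {S : Set ℝ}
    (hS : S ⊆ Ici 0) (h0S : 0 ∈ S) {ξ : ℝ → E} (hξ : HolderOnWith C (δ + ε) ξ S) (hξ0 : ξ 0 = 0)
    {s t : ℝ} (hs : s ∈ S) (ht : t ∈ S) (hst : s < t) :
    ‖t ^ (-δ : ℝ) • ξ t - s ^ (-δ : ℝ) • ξ s‖ ≤ 2 * C * (t - s) ^ (ε : ℝ) := by
  have hs0 : 0 ≤ s := hS hs
  have hts : 0 < t - s := sub_pos.2 hst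
  have ht0 : 0 < t := hs0.trans_lt hst
  have hξs : ‖ξ s‖ ≤ C * s ^ (δ + ε : ℝ) := by
    simpa [dist_eq_norm, hξ0, abs_of_nonneg hs0] using hξ.dist_le hs h0S
  have hξts : ‖ξ t - ξ s‖ ≤ C * (t - s) ^ (δ + ε : ℝ) := by
    simpa [dist_eq_norm, abs_of_pos hts] using hξ.dist_le ht hs
  have hincr : ‖t ^ (-δ : ℝ) • (ξ t - ξ s)‖ ≤ C * (t - s) ^ (ε : ℝ) := by
    rw [norm_smul, norm_of_nonneg (by positivity)]
    calc t ^ (-δ : ℝ) * ‖ξ t - ξ s‖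
        ≤ (t - s) ^ (-δ : ℝ) * (C * (t - s) ^ (δ + ε : ℝ)) := by
          gcongr ?_ * ?_
          exact rpow_le_rpow_of_nonpos hts (sub_le_self t hs0) (neg_nonpos.2 δ.coe_nonneg)
      _ = C * (t - s) ^ (ε : ℝ) := by
          rw [mul_left_comm, ← rpow_add hts, neg_add_cancel_left]
  have hweight : ‖(s ^ (-δ : ℝ) - t ^ (-δ : ℝ)) • ξ s‖ ≤ C * (t - s) ^ (ε : ℝ) := by
    rcases hs0.eq_or_lt with rfl | hs0
    · rw [hξ0, smul_zero, norm_zero]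
      positivity
    have hanti : 0 ≤ s ^ (-δ : ℝ) - t ^ (-δ : ℝ) :=
      sub_nonneg.2 (rpow_le_rpow_of_nonpos hs0 hst.le (neg_nonpos.2 δ.coe_nonneg))
    rw [norm_smul, norm_of_nonneg hanti]
    calc (s ^ (-δ : ℝ) - t ^ (-δ : ℝ)) * ‖ξ s‖
        ≤ (s ^ (-δ : ℝ) - t ^ (-δ : ℝ)) * (C * s ^ (δ + ε : ℝ)) := by gcongr
      _ = C * ((s ^ (-δ : ℝ) - t ^ (-δ : ℝ)) * s ^ (δ + ε : ℝ)) := mul_left_comm _ _ _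
      _ ≤ C * (t - s) ^ (ε : ℝ) := by
          gcongr
          exact rpow_neg_sub_rpow_neg_mul_rpow_le hδ ε.coe_nonneg hε hs0 hst
  calc ‖t ^ (-δ : ℝ) • ξ t - s ^ (-δ : ℝ) • ξ s‖
      = ‖t ^ (-δ : ℝ) • (ξ t - ξ s) - (s ^ (-δ : ℝ) - t ^ (-δ : ℝ)) • ξ s‖ := by
        congr 1
        module
    _ ≤ 2 * C * (t - s) ^ (ε : ℝ) := by
        linarith [norm_sub_le (t ^ (-δ : ℝ) • (ξ t - ξ s))
          ((s ^ (-δ : ℝ) - t ^ (-δ : ℝ)) • ξ s)]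

theorem holderOnWith_rpow_neg_smul {δ ε C : ℝ≥0} (hδ : δ ≤ 1) (hε : ε ≤ 1) {S : Set ℝ}
    (hS : S ⊆ Ici 0) (h0S : 0 ∈ S) {ξ : ℝ → E} (hξ : HolderOnWith C (δ + ε) ξ S)
    (hξ0 : ξ 0 = 0) : HolderOnWith (2 * C) ε (fun t => t ^ (-δ : ℝ) • ξ t) S := by
  refine holderOnWith_iff_dist_le.2 fun s hs t ht => ?_
  wlog hst : s < t generalizing s t
  · rcases (not_lt.1 hst).eq_or_lt with rfl | hts
    · rw [dist_self]
      positivity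
    · simpa only [dist_comm] using this t ht s hs hts
  rw [dist_comm s, Real.dist_eq, abs_of_pos (sub_pos.2 hst), dist_comm, dist_eq_norm]
  exact norm_rpow_neg_smul_sub_le hδ hε hS h0S hξ hξ0 hs ht hst

theorem exists_holderWith_integral_eq [CompleteSpace E] {β γ δ C : ℝ≥0} (hβ : 0 < β)
    (hγ : 0 < γ) (hβγ : β + γ ≤ 1) (hδ : δ ≤ 1) {T : ℝ} (hT : 0 ≤ T) {ξ : ℝ → E}
    (hξ : HolderOnWith C (δ + (β + γ)) ξ (Icc 0 T)) (hξ0 : ξ 0 = 0) :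
    ∃ (D : ℝ → E) (K : ℝ≥0), HolderWith K γ D ∧ ∀ t ∈ Icc 0 T,
      ∫ s in Ioc 0 t, (t - s) ^ (-β : ℝ) • s ^ (-δ : ℝ) • ξ s = ∫ r in Ioc 0 t, D r := by
  set g : ℝ → E := fun s => s ^ (-δ : ℝ) • ξ s
  set f : ℝ → E := fun s => g (projIcc 0 T hT s)
  have hg : HolderOnWith (2 * C) (β + γ) g (Icc 0 T) :=
    holderOnWith_rpow_neg_smul hδ hβγ Icc_subset_Ici_self ⟨le_rfl, hT⟩ hξ hξ0
  have hf : HolderWith (2 * C) (β + γ) f := holderWith_comp_projIcc hT hg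
  have hf0 : ∀ x ≤ 0, f x = 0 := fun x hx => by
    simp only [f, g, projIcc_of_le_left hT hx, hξ0, smul_zero]
  have hfg : ∀ s ∈ Icc 0 T, f s = g s := fun s hs => by simp only [f, projIcc_of_mem hT hs]
  obtain ⟨M, hM⟩ := isCompact_Icc.exists_bound_of_continuousOn
    (hg.continuousOn (add_pos hβ hγ))
  have hfM : ∀ x, ‖f x‖ ≤ M := fun x => hM _ (projIcc 0 T hT x).2
  have hβ1 : β < 1 := (lt_add_of_pos_right β hγ).trans_le hβγ
  refine ⟨marchaudDeriv β f, _, holderWith_marchaudDeriv hβ hγ hf hfM, fun t ht => ?_⟩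
  rw [integral_marchaudDeriv hβ hβ1 hγ hf hfM hf0 ht.1]
  refine setIntegral_congr_fun measurableSet_Ioc fun s hs => ?_
  simp only [hfg s ⟨hs.1.le, hs.2.trans ht.2⟩, g]

theorem mu_derivative_large_hurst_general [CompleteSpace E] {β δ α c T : ℝ} (hβ : 0 < β)
    (hδ : 0 ≤ δ) (hα : β + δ < α) (hα1 : α ≤ 1) (hT : 0 ≤ T) (hc : 0 ≤ c) {ξ : ℝ → E}
    (hξ : ∀ s ∈ Icc 0 T, ∀ t ∈ Icc 0 T, ‖ξ t - ξ s‖ ≤ c * |t - s| ^ α) (hξ0 : ξ 0 = 0) (κ : ℝ) :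
    ∃ μ' : ℝ → E, IntegrableOn μ' (Icc 0 T) ∧
      (∀ t ∈ Icc 0 T, κ • ∫ s in Ioc 0 t, (t - s) ^ (-β) • s ^ (-δ) • ξ s =
        ∫ s in Ioc 0 t, μ' s) ∧
      ∃ ψ : ℝ → E,
        (∃ c' : ℝ, 0 ≤ c' ∧ ∀ s ∈ Icc 0 T, ∀ t ∈ Icc 0 T,
          ‖ψ t - ψ s‖ ≤ c' * |t - s| ^ (α - β - δ)) ∧
        ∀ t, μ' t = κ • ξ t + ψ t := by
  lift β to ℝ≥0 using hβ.le
  lift δ to ℝ≥0 using hδ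
  lift c to ℝ≥0 using hc
  lift T to ℝ≥0 using hT
  obtain ⟨γ, hγα⟩ : ∃ γ : ℝ≥0, (γ : ℝ) = α - β - δ := ⟨⟨_, by linarith⟩, rfl⟩
  have hγ : 0 < γ := NNReal.coe_pos.1 (by linarith)
  obtain rfl : α = (δ + (β + γ) : ℝ≥0) := by
    push_cast
    linarith
  have hsum : δ + (β + γ) ≤ 1 := by exact_mod_cast hα1
  have hξ' : HolderOnWith c (δ + (β + γ)) ξ (Icc 0 (T : ℝ)) :=
    holderOnWith_iff_dist_le.2 fun s hs t ht => by
      simpa only [dist_eq_norm, Real.norm_eq_abs] using hξ t ht s hs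
  obtain ⟨D, K, hD, hint⟩ := exists_holderWith_integral_eq (by exact_mod_cast hβ) hγ
    (le_add_self.trans hsum) (le_self_add.trans hsum) T.coe_nonneg hξ' hξ0
  have hdiam : ∀ x ∈ Icc 0 (T : ℝ), ∀ y ∈ Icc 0 (T : ℝ), edist x y ≤ T := fun x hx y hy => by
    rw [edist_le_coe, ← NNReal.coe_le_coe, coe_nndist]
    simpa using Real.dist_le_of_mem_Icc hx hy
  obtain ⟨L, hψ⟩ : ∃ L, HolderOnWith L γ (fun t => D t - ξ t) (Icc 0 (T : ℝ)) :=
    ⟨_, holderOnWith_sub (hD.holderOnWith _) (hξ'.of_le hdiam (le_add_self.trans le_add_self))⟩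
  refine ⟨fun t => κ • D t, ((hD.continuous hγ).const_smul κ).integrableOn_Icc, fun t ht => ?_,
    fun t => κ • (D t - ξ t), ⟨‖κ‖ * L, by positivity, fun s hs t ht => ?_⟩, fun t => ?_⟩
  · rw [integral_smul, hint t ht]
  · rw [← smul_sub, norm_smul, mul_assoc]
    have := hψ.dist_le ht hs
    rw [dist_eq_norm, Real.dist_eq] at this
    rw [← hγα]
    exact mul_le_mul_of_nonneg_left this (norm_nonneg κ)
  · simp only [smul_sub, add_sub_cancel]

/-- `μ` is absolutely continuous on `[0,T]` with derivative `μ′ = c₁ ξ + ψ` a.e., where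
`ψ` is Hölder continuous with exponent `α + 1 − 2H`. -/
theorem mu_derivative_large_hurst
    (H T : ℝ) (hH : H ∈ Set.Ioo (1 / 2 : ℝ) 1) (hT : 0 < T)
    (ξ : ℝ → ℝ) (α : ℝ) (hα : α ∈ Set.Ioc (2 * H - 1) 1)
    (c : ℝ) (hc : 0 ≤ c)
    (hξHolder : ∀ s ∈ Set.Icc (0 : ℝ) T, ∀ t ∈ Set.Icc (0 : ℝ) T,
      |ξ t - ξ s| ≤ c * |t - s| ^ α)
    (hξ0 : ξ 0 = 0) :
    ∃ μ' : ℝ → ℝ, IntegrableOn μ' (Set.Icc (0 : ℝ) T) volume ∧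
      (∀ t ∈ Set.Icc (0 : ℝ) T, μfn H ξ t = μfn H ξ 0 + ∫ s in Set.Ioc (0 : ℝ) t, μ' s) ∧
      ∃ ψ : ℝ → ℝ,
        (∃ c' : ℝ, 0 ≤ c' ∧ ∀ s ∈ Set.Icc (0 : ℝ) T, ∀ t ∈ Set.Icc (0 : ℝ) T,
          |ψ t - ψ s| ≤ c' * |t - s| ^ (α + 1 - 2 * H)) ∧
        ∀ᵐ t ∂(volume.restrict (Set.Icc (0 : ℝ) T)), μ' t = c₁ H * ξ t + ψ t := by
  obtain ⟨μ', hint, hμ, ψ, hψ, hsum⟩ := mu_derivative_large_hurst_general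
    (β := H - 1 / 2) (δ := H - 1 / 2) (by linarith [hH.1]) (by linarith [hH.1])
    (by linarith [hα.1]) hα.2 hT.le hc hξHolder hξ0 (c₁ H)
  rw [show α - (H - 1 / 2) - (H - 1 / 2) = α + 1 - 2 * H by ring] at hψ
  refine ⟨μ', hint, fun t ht => ?_, ψ, hψ, .of_forall hsum⟩
  simpa only [μfn, neg_sub, smul_eq_mul, mul_assoc, Ioc_self, setIntegral_empty, mul_zero,
    zero_add] using hμ t ht
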